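/- Under the point-mass contaminated model F = (1−ε)F₀ + ε δ_{K e₁} with 1/3 ≤ ε < 1/2 and A > 3/2, the kurtosis of the projection ⟨u, x⟩ under F, as u ranges over unit vectors of ℝ^p, attains its minimum exactly at the vectors u with u₁² = 1 (i.e., u = e₁ or u = −e₁); that is, the direction of the contamination minimizes the kurtosis of the projections. -/

import Mathlib

open MeasureTheory
open scoped RealInnerProductSpace ENNReal

theorem aux_int {p : ℕ} (F₀ : Measure (EuclideanSpace ℝ (Fin p))) [IsProbabilityMeasure F₀]
    (hmom : Integrable (fun x => ‖x‖ ^ 4) F₀) (u : EuclideanSpace ℝ (Fin p)) (hu : ‖u‖ = 1)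
    (k : ℕ) (hk : k ≤ 4) : Integrable (fun x => ⟪u, x⟫ ^ k) F₀ := by
  refine Integrable.mono' ((integrable_const (1:ℝ)).add hmom) ?_ ?_
  · exact (Continuous.aestronglyMeasurable (by fun_prop))
  · refine Filter.Eventually.of_forall fun x => ?_
    have h1 : |⟪u, x⟫| ≤ ‖x‖ := by simpa [hu] using abs_real_inner_le_norm u x
    have h2 : |⟪u, x⟫| ^ k ≤ ‖x‖ ^ k := pow_le_pow_left₀ (abs_nonneg _) h1 k
    simp only [Real.norm_eq_abs, abs_pow, Pi.add_apply]
    refine h2.trans ?_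
    rcases le_total ‖x‖ 1 with h | h
    · have := pow_le_one₀ (norm_nonneg x) h (n := k)
      have := pow_nonneg (norm_nonneg x) 4
      linarith
    · have := pow_le_pow_right₀ h hk
      linarith

theorem aux_rot {p : ℕ} (hp : 0 < p)
    (F₀ : Measure (EuclideanSpace ℝ (Fin p)))
    (hrot : ∀ T : EuclideanSpace ℝ (Fin p) ≃ₗᵢ[ℝ] EuclideanSpace ℝ (Fin p),
      Measure.map (⇑T) F₀ = F₀) (u : EuclideanSpace ℝ (Fin p)) (hu : ‖u‖ = 1) (k : ℕ) :
    ∫ x, ⟪u, x⟫ ^ k ∂F₀ = ∫ x, (x ⟨0, hp⟩) ^ k ∂F₀ := by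
  set e : EuclideanSpace ℝ (Fin p) := EuclideanSpace.single (⟨0, hp⟩ : Fin p) 1 with he
  have hn : ‖e‖ = ‖u‖ := by simp [he, hu]
  set T := (ℝ ∙ (e - u))ᗮ.reflection with hT
  have hTe : T e = u := Submodule.reflection_sub hn
  conv_lhs => rw [← hrot T]
  rw [integral_map T.continuous.aemeasurable (Continuous.aestronglyMeasurable (by fun_prop))]
  congr 1
  ext x
  have : ⟪u, T x⟫ = x ⟨0, hp⟩ := by
    rw [← hTe, LinearIsometryEquiv.inner_map_map, he]
    simp [EuclideanSpace.inner_single_left]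
  rw [this]

theorem aux_odd {p : ℕ}
    (F₀ : Measure (EuclideanSpace ℝ (Fin p)))
    (hrot : ∀ T : EuclideanSpace ℝ (Fin p) ≃ₗᵢ[ℝ] EuclideanSpace ℝ (Fin p),
      Measure.map (⇑T) F₀ = F₀) (u : EuclideanSpace ℝ (Fin p)) (k : ℕ) (hk : Odd k) :
    ∫ x, ⟪u, x⟫ ^ k ∂F₀ = 0 := by
  have h : ∫ x, ⟪u, x⟫ ^ k ∂F₀ = - ∫ x, ⟪u, x⟫ ^ k ∂F₀ := by
    conv_lhs => rw [← hrot (LinearIsometryEquiv.neg ℝ)]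
    rw [integral_map (LinearIsometryEquiv.continuous _).aemeasurable
      (Continuous.aestronglyMeasurable (by fun_prop)), ← integral_neg]
    congr 1
    ext x
    simp [inner_neg_right, hk.neg_pow]
  linarith

theorem aux_mix {E : Type*} [MeasurableSpace E] [MeasurableSingletonClass E] (F₀ F : Measure E) (ε : ℝ)
    (h0 : 0 ≤ ε) (h1 : ε ≤ 1) (a : E)
    (hF : F = ENNReal.ofReal (1 - ε) • F₀ + ENNReal.ofReal ε • Measure.dirac a)
    (f : E → ℝ) (hf : Integrable f F₀) :
    ∫ x, f x ∂F = (1 - ε) * ∫ x, f x ∂F₀ + ε * f a := by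
  rw [hF, integral_add_measure (hf.smul_measure ENNReal.ofReal_ne_top)
    ((integrable_dirac (by simp)).smul_measure ENNReal.ofReal_ne_top),
    integral_smul_measure, integral_smul_measure, integral_dirac,
    ENNReal.toReal_ofReal h0, ENNReal.toReal_ofReal (by linarith)]
  simp

theorem aux_kurt {p : ℕ} (hp : 0 < p)
    (F₀ : Measure (EuclideanSpace ℝ (Fin p))) [IsProbabilityMeasure F₀]
    (hrot : ∀ T : EuclideanSpace ℝ (Fin p) ≃ₗᵢ[ℝ] EuclideanSpace ℝ (Fin p),
      Measure.map (⇑T) F₀ = F₀)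
    (hmom : Integrable (fun x => ‖x‖ ^ 4) F₀)
    (hcov : ∫ x, (x ⟨0, hp⟩) ^ 2 ∂F₀ = 1)
    (A : ℝ) (hA : A = ∫ x, (x ⟨0, hp⟩) ^ 4 ∂F₀)
    (ε K : ℝ) (hε3 : 0 ≤ ε) (hε2 : ε < 1)
    (F : Measure (EuclideanSpace ℝ (Fin p)))
    (hF : F = ENNReal.ofReal (1 - ε) • F₀ +
      ENNReal.ofReal ε • Measure.dirac (K • EuclideanSpace.single (⟨0, hp⟩ : Fin p) 1))
    (u : EuclideanSpace ℝ (Fin p)) (hu : ‖u‖ = 1) (t : ℝ) (ht : t = K ^ 2 * u ⟨0, hp⟩ ^ 2) :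
      (∫ x, (⟪u, x⟫ - ∫ y, ⟪u, y⟫ ∂F) ^ 4 ∂F) /
        (∫ x, (⟪u, x⟫ - ∫ y, ⟪u, y⟫ ∂F) ^ 2 ∂F) ^ 2 =
      ((A + 6 * ε ^ 2 * t + ε * (ε ^ 3 + (1 - ε) ^ 3) * t ^ 2) / (1 + ε * t) ^ 2) / (1 - ε) := by
  have i1 := aux_int F₀ hmom u hu 1 (by norm_num)
  have i2 := aux_int F₀ hmom u hu 2 (by norm_num)
  have i3 := aux_int F₀ hmom u hu 3 (by norm_num)
  have i4 := aux_int F₀ hmom u hu 4 (by norm_num)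
  have m1 := aux_odd F₀ hrot u 1 (by decide)
  have m3 := aux_odd F₀ hrot u 3 (by decide)
  have m2 := aux_rot hp F₀ hrot u hu 2
  have m4 := aux_rot hp F₀ hrot u hu 4
  rw [hcov] at m2
  rw [← hA] at m4
  have hin : ⟪u, K • EuclideanSpace.single (⟨0, hp⟩ : Fin p) (1:ℝ)⟫ = K * u ⟨0, hp⟩ := by
    rw [inner_smul_right]; simp [EuclideanSpace.inner_single_right]
  have mean : ∫ y, ⟪u, y⟫ ∂F = ε * (K * u ⟨0, hp⟩) := by
    rw [aux_mix F₀ F ε hε3 hε2.le _ hF (fun y => ⟪u, y⟫) (by simpa using i1), hin]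
    simp only [pow_one] at m1
    rw [m1]; ring
  rw [mean]
  set c := K * u ⟨0, hp⟩ with hc
  have htc : t = c ^ 2 := by rw [ht, hc]; ring
  have e2 : (fun x => (⟪u, x⟫ - ε * c) ^ 2) =
      fun x => ⟪u, x⟫ ^ 2 + ((-2 * (ε * c)) * ⟪u, x⟫ ^ 1 + (ε * c) ^ 2) := by
    ext x; ring
  have e4 : (fun x => (⟪u, x⟫ - ε * c) ^ 4) =
      fun x => ⟪u, x⟫ ^ 4 + ((-4 * (ε * c)) * ⟪u, x⟫ ^ 3 + ((6 * (ε * c) ^ 2) * ⟪u, x⟫ ^ 2 +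
        ((-4 * (ε * c) ^ 3) * ⟪u, x⟫ ^ 1 + (ε * c) ^ 4))) := by
    ext x; ring
  have j1 := (i1.const_mul (-2 * (ε * c))).add (integrable_const (μ := F₀) ((ε * c) ^ 2))
  have k1 := (i1.const_mul (-4 * (ε * c) ^ 3)).add (integrable_const (μ := F₀) ((ε * c) ^ 4))
  have k2 := (i2.const_mul (6 * (ε * c) ^ 2)).add k1
  have k3 := (i3.const_mul (-4 * (ε * c))).add k2
  have v2 : ∫ x, (⟪u, x⟫ - ε * c) ^ 2 ∂F₀ = 1 + (ε * c) ^ 2 := by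
    rw [e2]
    erw [integral_add i2 j1, integral_add (i1.const_mul _) (integrable_const _)]
    rw [integral_const_mul, m1, m2]; simp
  have v4 : ∫ x, (⟪u, x⟫ - ε * c) ^ 4 ∂F₀ = A + 6 * (ε * c) ^ 2 + (ε * c) ^ 4 := by
    rw [e4]
    erw [integral_add i4 k3, integral_add (i3.const_mul _) k2, integral_add (i2.const_mul _) k1,
      integral_add (i1.const_mul _) (integrable_const _)]
    rw [integral_const_mul, integral_const_mul, integral_const_mul, m1, m2, m3, m4]; simp; ring
  have w2 := aux_mix F₀ F ε hε3 hε2.le _ hF (fun x => (⟪u, x⟫ - ε * c) ^ 2)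
    (by rw [e2]; exact i2.add j1)
  have w4 := aux_mix F₀ F ε hε3 hε2.le _ hF (fun x => (⟪u, x⟫ - ε * c) ^ 4)
    (by rw [e4]; exact i4.add k3)
  rw [v2, hin] at w2
  rw [v4, hin] at w4
  rw [w2, w4]
  have hpos : 0 < 1 + ε * t := by rw [htc]; positivity
  have ha : 0 < 1 - ε := by linarith
  have hd : (1 - ε) * (1 + (ε * c) ^ 2) + ε * (c - ε * c) ^ 2 = (1 - ε) * (1 + ε * t) := by
    rw [htc]; ring
  rw [hd, div_div, div_eq_div_iff (by positivity) (by positivity), htc]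
  ring

theorem aux_mono (A ε s t : ℝ) (hA2 : 3 / 2 < A) (hε3 : 1 / 3 ≤ ε) (hε2 : ε < 1 / 2)
    (hs : 0 ≤ s) (hst : s < t) :
    (A + 6 * ε ^ 2 * t + ε * (ε ^ 3 + (1 - ε) ^ 3) * t ^ 2) / (1 + ε * t) ^ 2 <
    (A + 6 * ε ^ 2 * s + ε * (ε ^ 3 + (1 - ε) ^ 3) * s ^ 2) / (1 + ε * s) ^ 2 := by
  have hε : 0 < ε := by linarith
  have ht : 0 < t := by linarith
  rw [div_lt_div_iff₀ (by positivity) (by positivity), ← sub_pos]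
  have key : (A + 6 * ε ^ 2 * s + ε * (ε ^ 3 + (1 - ε) ^ 3) * s ^ 2) * (1 + ε * t) ^ 2 -
      (A + 6 * ε ^ 2 * t + ε * (ε ^ 3 + (1 - ε) ^ 3) * t ^ 2) * (1 + ε * s) ^ 2 =
      ε * (t - s) * ((A - 3 * ε) * (2 + ε * (s + t)) +
        (3 * ε - 1) * (s + t + 2 * ε * s * t)) := by ring
  rw [key]
  have h1 : 0 < A - 3 * ε := by linarith
  have h2 : 0 ≤ 3 * ε - 1 := by linarith
  have h3 : 0 < t - s := by linarith
  positivity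

/-- Under the point-mass contaminated model `F = (1−ε)F₀ + ε δ_{K e₁}` with
`1/3 ≤ ε < 1/2` and `A > 3/2`, the kurtosis of the projection `⟪u, x⟫` under `F`, as `u`
ranges over unit vectors, attains its minimum exactly at the unit vectors with `u₁² = 1`
(i.e. at `±e₁`, the direction of the contamination). -/
theorem contamination_direction_minimizes_kurtosis {p : ℕ} (hp : 0 < p)
    (F₀ : Measure (EuclideanSpace ℝ (Fin p))) [IsProbabilityMeasure F₀]
    (hrot : ∀ T : EuclideanSpace ℝ (Fin p) ≃ₗᵢ[ℝ] EuclideanSpace ℝ (Fin p),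
      Measure.map (⇑T) F₀ = F₀)
    (hmom : Integrable (fun x => ‖x‖ ^ 4) F₀)
    (hcov : ∫ x, (x ⟨0, hp⟩) ^ 2 ∂F₀ = 1)
    (A : ℝ) (hA : A = ∫ x, (x ⟨0, hp⟩) ^ 4 ∂F₀) (hA2 : 3 / 2 < A)
    (ε K : ℝ) (hε3 : 1 / 3 ≤ ε) (hε2 : ε < 1 / 2) (hK : 0 < K)
    (F : Measure (EuclideanSpace ℝ (Fin p)))
    (hF : F = ENNReal.ofReal (1 - ε) • F₀ +
      ENNReal.ofReal ε • Measure.dirac (K • EuclideanSpace.single (⟨0, hp⟩ : Fin p) 1))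
    (kurt : EuclideanSpace ℝ (Fin p) → ℝ)
    (hkurt : ∀ v, kurt v =
      (∫ x, (⟪v, x⟫ - ∫ y, ⟪v, y⟫ ∂F) ^ 4 ∂F) /
        (∫ x, (⟪v, x⟫ - ∫ y, ⟪v, y⟫ ∂F) ^ 2 ∂F) ^ 2) :
    ∀ u : EuclideanSpace ℝ (Fin p), ‖u‖ = 1 →
      kurt (EuclideanSpace.single (⟨0, hp⟩ : Fin p) 1) ≤ kurt u ∧
      (kurt u = kurt (EuclideanSpace.single (⟨0, hp⟩ : Fin p) 1) ↔
        u ⟨0, hp⟩ ^ 2 = 1) := by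
  intro u hu
  set e : EuclideanSpace ℝ (Fin p) := EuclideanSpace.single (⟨0, hp⟩ : Fin p) 1 with he
  have hne : ‖e‖ = 1 := by simp [he]
  have he0 : e ⟨0, hp⟩ = 1 := by simp [he]
  have hu0 : u ⟨0, hp⟩ ^ 2 ≤ 1 := by
    have := PiLp.norm_apply_le u ⟨0, hp⟩
    rw [hu, Real.norm_eq_abs] at this
    exact (sq_le_one_iff_abs_le_one _).2 this
  have k1 := aux_kurt hp F₀ hrot hmom hcov A hA ε K (by linarith) (by linarith) F hF e hne (K ^ 2)
    (by rw [he0]; ring)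
  have k2 := aux_kurt hp F₀ hrot hmom hcov A hA ε K (by linarith) (by linarith) F hF u hu _ rfl
  rw [← hkurt] at k1 k2
  rcases hu0.lt_or_eq with h | h
  · have hlt : K ^ 2 * u ⟨0, hp⟩ ^ 2 < K ^ 2 := by
      have : 0 < K ^ 2 := by positivity
      nlinarith
    have := aux_mono A ε _ _ hA2 hε3 hε2 (by positivity) hlt
    have hk : kurt e < kurt u := by
      rw [k1, k2]
      exact div_lt_div_of_pos_right this (by linarith)
    exact ⟨hk.le, fun h' => absurd h' hk.ne', fun h' => absurd h' h.ne⟩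
  · rw [h, mul_one, ← k1] at k2
    exact ⟨k2.ge, fun _ => h, fun _ => k2⟩
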